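/- For every sequence (λ_n)_{n≥2} of real numbers there exist a smooth 2π-periodic function g : ℝ → ℝ with g(π) = 0 and g'(π) = 0, and a smooth map φ : ℝ × ℝ → ℝ with ∂_t φ(t,θ) = g(φ(t,θ)) and φ(0,θ) = θ for all t, θ, such that the time-one map satisfies φ(1,π) = π, ∂_θ φ(1,θ)|_{θ=π} = 1, and ∂_θ^n φ(1,θ)|_{θ=π} = λ_n for every n ≥ 2. -/

import Mathlib

open scoped Real

/-!
Let `g` and `h` vanish to first order at a common fixed point `a`, with the same derivatives at `a`
below order `n`. Near `a` both flows are tangent to the identity, so Grönwall's inequality gives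
`φ_g t x - φ_h t x = t c (x - a) ^ n + o((x - a) ^ n)`, where `c` is the coefficient of
`(x - a) ^ n` in `g - h`. Hence changing the `n`th derivative of the field at `a` changes the `n`th
derivative of the time-one map by the same amount and affects no lower one. The Taylor coefficients
of `g` can thus be solved for one after the other, starting from order two, and Borel's theorem
provides a smooth field, made periodic away from `a`, with the resulting Taylor series.
-/

section

open Set Filter Function Topology Asymptotics MeasureTheory
open scoped ContDiff NNReal

section Calculus

variable {P E : Type*} [NormedAddCommGroup P] [NormedSpace ℝ P]
  [NormedAddCommGroup E] [NormedSpace ℝ E]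

-- The integral is the value at `0` of the convolution of the indicator of `(0, 1]` with the
-- reflection of `A p`, cut off outside `[-2, 2]` to be compactly supported.
theorem contDiff_integral_zero_one {n : ℕ∞} {A : P → ℝ → E}
    (hA : ContDiff ℝ n (uncurry A)) : ContDiff ℝ n fun p => ∫ s in 0..1, A p s := by
  let χ : ContDiffBump (0 : ℝ) := ⟨2, 3, by norm_num, by norm_num⟩
  have hχ_one (s : ℝ) (hs : s ∈ Ioc 0 1) : χ (-s) = 1 := χ.one_of_mem_closedBall <| by
    rw [Metric.mem_closedBall, dist_zero_right, norm_neg, Real.norm_of_nonneg hs.1.le]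
    exact hs.2.trans one_le_two
  have hχ_zero (y : ℝ) (hy : y ∉ Metric.closedBall 0 3) : χ y = 0 :=
    χ.zero_of_le_dist (not_le.1 hy).le
  have hindicator : LocallyIntegrable ((Ioc (0 : ℝ) 1).indicator fun _ => (1 : ℝ)) :=
    ((integrable_indicator_iff measurableSet_Ioc).2 (by simp)).locallyIntegrable
  have hcutoff : ContDiff ℝ n fun q : P × ℝ => χ q.2 • A q.1 (-q.2) :=
    (χ.contDiff.comp contDiff_snd).smul (hA.comp (contDiff_fst.prodMk contDiff_snd.neg))
  have hconv := contDiffOn_convolution_right_with_param_comp (μ := volume)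
    (ContinuousLinearMap.lsmul ℝ ℝ) (s := (univ : Set P)) (v := fun _ => (0 : ℝ))
    (g := fun p y => χ y • A p (-y)) contDiffOn_const isOpen_univ (isCompact_closedBall 0 3)
    (fun p y _ hy => by simp only [hχ_zero y hy, zero_smul]) hindicator hcutoff.contDiffOn
  convert contDiffOn_univ.1 hconv using 2 with p
  rw [intervalIntegral.integral_of_le zero_le_one, ← integral_indicator measurableSet_Ioc,
    convolution_def]
  refine integral_congr_ae (.of_forall fun s => ?_)
  by_cases hs : s ∈ Ioc (0 : ℝ) 1 <;> simp [hs, hχ_one]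

theorem contDiff_integral_zero_right {n : ℕ∞} {A : P → ℝ → E} {τ : P → ℝ}
    (hA : ContDiff ℝ n (uncurry A)) (hτ : ContDiff ℝ n τ) :
    ContDiff ℝ n fun p => ∫ s in 0..τ p, A p s := by
  have hrescale (p : P) : ∫ s in 0..τ p, A p s = τ p • ∫ s in 0..1, A p (τ p * s) := by
    simp
  simp only [hrescale]
  refine hτ.smul (contDiff_integral_zero_one ?_)
  exact hA.comp (contDiff_fst.prodMk ((hτ.comp contDiff_fst).mul contDiff_snd))

theorem dslope_eq_integral_deriv [CompleteSpace E] {f : ℝ → E} (hf : ContDiff ℝ 1 f) (x y : ℝ) :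
    dslope f x y = ∫ u in 0..1, deriv f (x + u * (y - x)) := by
  rcases eq_or_ne y x with rfl | hne
  · simp
  have : Continuous (deriv f) := hf.continuous_deriv_one
  have hpath (u : ℝ) : HasDerivAt (fun u => f (x + u * (y - x)))
      ((y - x) • deriv f (x + u * (y - x))) u :=
    (hf.differentiable one_ne_zero _).hasDerivAt.scomp u
      (by simpa using ((hasDerivAt_id u).mul_const (y - x)).const_add x)
  have hftc := intervalIntegral.integral_eq_sub_of_hasDerivAt (a := 0) (b := 1)
    (fun u _ => hpath u) (Continuous.intervalIntegrable (by fun_prop) _ _)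
  rw [intervalIntegral.integral_smul] at hftc
  rw [dslope_of_ne _ hne, slope_def_module, inv_smul_eq_iff₀ (sub_ne_zero.2 hne), hftc]
  simp

theorem continuous_uncurry_dslope [CompleteSpace E] {f : ℝ → E} (hf : ContDiff ℝ 1 f) :
    Continuous (uncurry (dslope f)) := by
  have : Continuous (deriv f) := hf.continuous_deriv_one
  have hintegral : uncurry (dslope f) =
      fun p : ℝ × ℝ => ∫ u in 0..1, deriv f (p.1 + u * (p.2 - p.1)) :=
    funext fun p => dslope_eq_integral_deriv hf p.1 p.2
  rw [hintegral]
  exact intervalIntegral.continuous_parametric_intervalIntegral_of_continuous' (by fun_prop) 0 1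

theorem exists_lipschitzWith_of_periodic {f : ℝ → E} {c : ℝ} (hf : ContDiff ℝ 1 f)
    (hper : Periodic f c) (hc : c ≠ 0) : ∃ K, LipschitzWith K f := by
  have hper' : Periodic (deriv f) c := fun x => by
    rw [← deriv_comp_add_const, funext hper]
  obtain ⟨K, hK⟩ :=
    (hper'.isBounded_of_continuous hc hf.continuous_deriv_one).exists_norm_le
  have hK' (x : ℝ) : ‖deriv f x‖ ≤ K := hK _ (mem_range_self x)
  exact ⟨K.toNNReal, lipschitzWith_of_nnnorm_deriv_le (hf.differentiable one_ne_zero)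
    fun x => NNReal.coe_le_coe.1 ((hK' x).trans (Real.le_coe_toNNReal K))⟩

end Calculus

/-- `φ t x` is the position at time `t` of the integral curve of the vector field `v` that starts
at `x`: the flow of a complete autonomous vector field, with the time variable first. -/
structure IsGlobalFlow {E : Type*} [NormedAddCommGroup E] [NormedSpace ℝ E]
    (v : E → E) (φ : ℝ → E → E) : Prop where
  hasDerivAt : ∀ t x, HasDerivAt (fun s => φ s x) (v (φ t x)) t
  zero_apply : ∀ x, φ 0 x = x

section Existence

variable {E : Type*} [NormedAddCommGroup E] [NormedSpace ℝ E] [CompleteSpace E]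
  {v : E → E} {K : ℝ≥0}

-- On the ball of radius `‖v x‖ + 1` around `x` the speed is at most `(1 + K) (‖v x‖ + 1)`, so the
-- existence time `1 / (1 + K)` does not depend on `x`.
theorem exists_isIntegralCurveOn_Ioo_of_lipschitzWith (hv : LipschitzWith K v) (x : E) :
    ∃ γ : ℝ → E, γ 0 = x ∧
      IsIntegralCurveOn γ (fun _ => v) (Ioo (-(1 / (1 + K : ℝ))) (1 / (1 + K))) := by
  have hε : (0 : ℝ) ≤ 1 / (1 + K) := by positivity
  have hspeed : ∀ y ∈ Metric.closedBall x (‖v x‖₊ + 1 : ℝ≥0),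
      ‖v y‖ ≤ ((1 + K) * (‖v x‖₊ + 1) : ℝ≥0) := fun y hy => by
    have hdist : dist y x ≤ ‖v x‖ + 1 := by simpa using hy
    calc ‖v y‖ ≤ ‖v x‖ + dist (v y) (v x) := by
          rw [dist_eq_norm]; exact norm_le_norm_add_norm_sub' _ _
      _ ≤ ‖v x‖ + K * (‖v x‖ + 1) := by
          gcongr; exact (hv.dist_le_mul y x).trans (by gcongr)
      _ ≤ ((1 + K) * (‖v x‖₊ + 1) : ℝ≥0) := by push_cast; linarith
  have hPL : IsPicardLindelof (fun _ => v) (tmin := -(1 / (1 + K : ℝ))) (tmax := 1 / (1 + K))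
      ⟨0, by simpa using hε, hε⟩ x (‖v x‖₊ + 1) 0 ((1 + K) * (‖v x‖₊ + 1)) K := by
    refine .of_time_independent hspeed hv.lipschitzOnWith (le_of_eq ?_)
    simp only [sub_zero, zero_sub, neg_neg, max_self, NNReal.coe_zero]
    push_cast
    field_simp
  obtain ⟨γ, hγ0, hγ⟩ := hPL.exists_eq_forall_mem_Icc_hasDerivWithinAt₀
  exact ⟨γ, hγ0, IsIntegralCurveOn.mono hγ Ioo_subset_Icc_self⟩

open scoped Manifold in
theorem exists_isIntegralCurve_of_lipschitzWith (hv : ContDiff ℝ 1 v) (hK : LipschitzWith K v)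
    (x : E) : ∃ γ : ℝ → E, γ 0 = x ∧ IsIntegralCurve γ fun _ => v := by
  have hlocal (y : E) : ∃ γ : ℝ → E, γ 0 = y ∧
      IsMIntegralCurveOn (I := 𝓘(ℝ, E)) γ v (Ioo (-(1 / (1 + K : ℝ))) (1 / (1 + K))) := by
    obtain ⟨γ, hγ0, hγ⟩ := exists_isIntegralCurveOn_Ioo_of_lipschitzWith hK y
    exact ⟨γ, hγ0, fun t ht => (hγ t ht).hasFDerivWithinAt.hasMFDerivWithinAt⟩
  obtain ⟨γ, hγ0, hγ⟩ := exists_isMIntegralCurve_of_isMIntegralCurveOn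
    (contMDiff_vectorSpace_iff_contDiff.2 hv) (by positivity) hlocal x
  exact ⟨γ, hγ0, fun t =>
    hasDerivAt_iff_hasFDerivAt.2 (hasMFDerivAt_iff_hasFDerivAt.1 (hγ t))⟩

theorem exists_isGlobalFlow (hv : ContDiff ℝ 1 v) (hK : LipschitzWith K v) :
    ∃ φ, IsGlobalFlow v φ := by
  choose γ hγ0 hγ using exists_isIntegralCurve_of_lipschitzWith hv hK
  exact ⟨fun t x => γ x t, fun t x => hγ x t, hγ0⟩

end Existence

namespace IsGlobalFlow

section Continuity

variable {E : Type*} [NormedAddCommGroup E] [NormedSpace ℝ E]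
  {v : E → E} {φ : ℝ → E → E} {K : ℝ≥0}

theorem continuous_left (hφ : IsGlobalFlow v φ) (x : E) : Continuous fun t => φ t x :=
  continuous_iff_continuousAt.2 fun t => (hφ.hasDerivAt t x).continuousAt

theorem neg (hφ : IsGlobalFlow v φ) : IsGlobalFlow (-v) fun t => φ (-t) where
  hasDerivAt t x := by
    simpa [comp_def] using (hφ.hasDerivAt (-t) x).scomp t (hasDerivAt_neg t)
  zero_apply x := by simpa using hφ.zero_apply x

theorem dist_le (hφ : IsGlobalFlow v φ) (hK : LipschitzWith K v) (t : ℝ) (x y : E) :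
    dist (φ t x) (φ t y) ≤ dist x y * Real.exp (K * |t|) := by
  wlog ht : 0 ≤ t generalizing v φ t
  · simpa using this hφ.neg hK.neg (-t) (neg_nonneg.2 (not_le.1 ht).le)
  have hgronwall := dist_le_of_trajectories_ODE (v := fun _ => v) (fun _ => hK)
    (hφ.continuous_left x).continuousOn (fun s _ => (hφ.hasDerivAt s x).hasDerivWithinAt)
    (hφ.continuous_left y).continuousOn (fun s _ => (hφ.hasDerivAt s y).hasDerivWithinAt)
    le_rfl t (right_mem_Icc.2 ht)
  simpa [hφ.zero_apply, abs_of_nonneg ht] using hgronwall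

theorem continuous_uncurry (hφ : IsGlobalFlow v φ) (hK : LipschitzWith K v) :
    Continuous (uncurry φ) := by
  refine continuous_iff_continuousAt.2 fun ⟨t, x⟩ => ?_
  have hcurve : Tendsto (fun p : ℝ × E => φ p.1 x) (𝓝 (t, x)) (𝓝 (φ t x)) :=
    ((hφ.continuous_left x).comp continuous_fst).tendsto (t, x)
  have hbound : Tendsto (fun p : ℝ × E => dist x p.2 * Real.exp (K * |p.1|)) (𝓝 (t, x)) (𝓝 0) :=
    Continuous.tendsto' (by fun_prop) _ _ (by simp)
  exact (tendsto_iff_of_dist (squeeze_zero (fun _ => dist_nonneg)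
    (fun p : ℝ × E => hφ.dist_le hK p.1 x p.2) hbound)).1 hcurve

theorem apply_eq_self_of_eq_zero (hφ : IsGlobalFlow v φ) (hK : LipschitzWith K v) {a : E}
    (ha : v a = 0) (t : ℝ) : φ t a = a := by
  have hconst (s : ℝ) : HasDerivAt (fun _ : ℝ => a) (v a) s := ha ▸ hasDerivAt_const s a
  exact congrFun (ODE_solution_unique_univ (v := fun _ => v) (s := fun _ => univ) (t₀ := 0)
    (fun _ => hK.lipschitzOnWith) (fun s => ⟨hφ.hasDerivAt s a, mem_univ _⟩)
    (fun s => ⟨hconst s, mem_univ _⟩) (hφ.zero_apply a)) t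

end Continuity

section Smoothness

variable {g : ℝ → ℝ} {φ : ℝ → ℝ → ℝ} {K : ℝ≥0}

-- The difference `φ t y - φ t x` solves the linear equation `w' = dslope g (φ t x) (φ t y) * w`.
theorem sub_eq_mul_exp_integral_dslope (hφ : IsGlobalFlow g φ) (hg : ContDiff ℝ 1 g)
    (t x y : ℝ) :
    φ t y - φ t x = (y - x) * Real.exp (∫ s in 0..t, dslope g (φ s x) (φ s y)) := by
  have hcont : Continuous fun s => dslope g (φ s x) (φ s y) :=
    (continuous_uncurry_dslope hg).comp ((hφ.continuous_left x).prodMk (hφ.continuous_left y))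
  have hconst (t : ℝ) : HasDerivAt (fun t => (φ t y - φ t x) *
      Real.exp (-∫ s in 0..t, dslope g (φ s x) (φ s y))) 0 t := by
    refine (((hφ.hasDerivAt t y).sub (hφ.hasDerivAt t x)).mul
      (hcont.integral_hasStrictDerivAt 0 t).hasDerivAt.neg.exp).congr_deriv ?_
    rw [← sub_smul_dslope g (φ t x) (φ t y)]
    simp only [Pi.sub_apply, Pi.neg_apply, smul_eq_mul]
    ring
  have heq := is_const_of_deriv_eq_zero (fun t => (hconst t).differentiableAt)
    (fun t => (hconst t).deriv) t 0
  rw [Real.exp_neg, mul_inv_eq_iff_eq_mul₀ (Real.exp_ne_zero _)] at heq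
  simpa [hφ.zero_apply] using heq

theorem hasDerivAt_right (hφ : IsGlobalFlow g φ) (hg : ContDiff ℝ 1 g) (hK : LipschitzWith K g)
    (t x : ℝ) : HasDerivAt (φ t) (Real.exp (∫ s in 0..t, deriv g (φ s x))) x := by
  have hcont : Continuous fun y => Real.exp (∫ s in 0..t, dslope g (φ s x) (φ s y)) := by
    refine Real.continuous_exp.comp
      (intervalIntegral.continuous_parametric_intervalIntegral_of_continuous' ?_ 0 t)
    exact (continuous_uncurry_dslope hg).comp (((hφ.continuous_left x).comp continuous_snd).prodMk
      ((hφ.continuous_uncurry hK).comp continuous_swap))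
  rw [hasDerivAt_iff_tendsto_slope]
  refine ((hcont.tendsto' x _ (by simp only [dslope_same])).mono_left nhdsWithin_le_nhds).congr' ?_
  filter_upwards [self_mem_nhdsWithin] with y hy
  rw [slope_def_field, hφ.sub_eq_mul_exp_integral_dslope hg,
    mul_div_cancel_left₀ _ (sub_ne_zero.2 hy)]

theorem hasFDerivAt_uncurry (hφ : IsGlobalFlow g φ) (hg : ContDiff ℝ 1 g)
    (hK : LipschitzWith K g) (p : ℝ × ℝ) :
    HasFDerivAt (uncurry φ) (g (φ p.1 p.2) • ContinuousLinearMap.fst ℝ ℝ ℝ +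
      Real.exp (∫ s in 0..p.1, deriv g (φ s p.2)) • ContinuousLinearMap.snd ℝ ℝ ℝ) p := by
  have hcont := hφ.continuous_uncurry hK
  have htime : Continuous fun p : ℝ × ℝ => g (φ p.1 p.2) := hg.continuous.comp hcont
  have hspace : Continuous fun p : ℝ × ℝ => Real.exp (∫ s in 0..p.1, deriv g (φ s p.2)) := by
    refine Real.continuous_exp.comp
      (intervalIntegral.continuous_parametric_intervalIntegral_of_continuous ?_ continuous_fst)
    exact hg.continuous_deriv_one.comp
      (hcont.comp (continuous_snd.prodMk (continuous_snd.comp continuous_fst)))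
  have hspan := (ContinuousLinearMap.toSpanSingletonCLE (𝕜 := ℝ) (E := ℝ)).continuous
  have htotal := hasStrictFDerivAt_uncurry_coprod (u := p)
    (.of_forall fun q => (hφ.hasDerivAt q.1 q.2).hasFDerivAt)
    (.of_forall fun q => (hφ.hasDerivAt_right hg hK q.1 q.2).hasFDerivAt)
    (f₁ := fun t x => .toSpanSingleton ℝ (g (φ t x)))
    (f₂ := fun t x => .toSpanSingleton ℝ (Real.exp (∫ s in 0..t, deriv g (φ s x))))
    (hspan.comp htime).continuousAt (hspan.comp hspace).continuousAt
  refine htotal.hasFDerivAt.congr_fderiv ?_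
  ext <;> simp [HasUncurry.uncurry]

theorem contDiff_uncurry {n : ℕ∞} (hφ : IsGlobalFlow g φ) (hg : ContDiff ℝ n g) (hn : 1 ≤ n)
    (hK : LipschitzWith K g) : ContDiff ℝ n (uncurry φ) := by
  refine contDiff_iff_forall_nat_le.2 fun m hm => ?_
  induction m with
  | zero => exact contDiff_zero.2 (hφ.continuous_uncurry hK)
  | succ m ih =>
    specialize ih (le_trans (mod_cast m.le_succ) hm)
    have hgm : ContDiff ℝ (m + 1) g := hg.of_le (mod_cast hm)
    have htime : ContDiff ℝ m fun p : ℝ × ℝ => g (φ p.1 p.2) := (hgm.of_le le_self_add).comp ih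
    have hspace : ContDiff ℝ m fun p : ℝ × ℝ => ∫ s in 0..p.1, deriv g (φ s p.2) :=
      contDiff_integral_zero_right (n := m) (hgm.deriv'.comp
        (ih.comp (contDiff_snd.prodMk (contDiff_snd.comp contDiff_fst)))) contDiff_fst
    rw [Nat.cast_add_one, contDiff_succ_iff_hasFDerivAt]
    exact ⟨_, (htime.smul contDiff_const).add (hspace.exp.smul contDiff_const),
      hφ.hasFDerivAt_uncurry (hg.of_le (mod_cast hn)) hK⟩

theorem contDiff_right {n : ℕ∞} (hφ : IsGlobalFlow g φ) (hg : ContDiff ℝ n g) (hn : 1 ≤ n)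
    (hK : LipschitzWith K g) (t : ℝ) : ContDiff ℝ n (φ t) :=
  (hφ.contDiff_uncurry hg hn hK).comp (contDiff_const.prodMk contDiff_id)

end Smoothness

end IsGlobalFlow

section Taylor

variable {E : Type*} [NormedAddCommGroup E] [NormedSpace ℝ E] {f : ℝ → E} {a : ℝ} {n : ℕ}

theorem eq_zero_of_isLittleO_pow_smul {c : E}
    (h : (fun x => (x - a) ^ n • c) =o[𝓝 a] fun x => (x - a) ^ n) : c = 0 := by
  by_contra hc
  have hself : (fun x => (x - a) ^ n) =O[𝓝 a] fun x => (x - a) ^ n • c :=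
    .of_bound ‖c‖⁻¹ (.of_forall fun x => by
      rw [norm_smul, mul_comm ‖_‖, inv_mul_cancel_left₀ (norm_ne_zero_iff.2 hc)])
  have hne : ∃ᶠ x in 𝓝[≠] a, x ≠ a := Eventually.frequently eventually_mem_nhdsWithin
  have hpow : ∃ᶠ x in 𝓝 a, (x - a) ^ n ≠ 0 :=
    (hne.filter_mono nhdsWithin_le_nhds).mono fun x hx => pow_ne_zero n (sub_ne_zero.2 hx)
  exact isLittleO_irrefl hpow (hself.trans_isLittleO h)

theorem isLittleO_sub_pow_smul_of_iteratedDeriv_eq_zero (hf : ContDiff ℝ n f)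
    (h : ∀ j < n, iteratedDeriv j f a = 0) :
    (fun x => f x - (x - a) ^ n • (n.factorial : ℝ)⁻¹ • iteratedDeriv n f a)
      =o[𝓝 a] fun x => (x - a) ^ n := by
  refine (taylor_isLittleO_univ hf).congr_left fun x => ?_
  rw [taylor_within_apply, Finset.sum_range_succ, Finset.sum_eq_zero fun j hj => by
    rw [iteratedDerivWithin_univ, h j (Finset.mem_range.1 hj), smul_zero]]
  rw [zero_add, iteratedDerivWithin_univ, mul_comm, mul_smul]

theorem isBigO_pow_pow_nhds_zero_of_le {m n : ℕ} (h : m ≤ n) :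
    (fun x : ℝ => x ^ n) =O[𝓝 0] fun x => x ^ m := by
  obtain rfl | hlt := h.eq_or_lt
  · exact isBigO_refl _ _
  · exact (isLittleO_pow_pow hlt).isBigO

theorem isLittleO_pow_iff_iteratedDeriv_eq_zero (hf : ContDiff ℝ n f) :
    f =o[𝓝 a] (fun x => (x - a) ^ n) ↔ ∀ j ≤ n, iteratedDeriv j f a = 0 := by
  refine ⟨fun h j => ?_, fun h => ?_⟩
  · induction j using Nat.strong_induction_on with | _ j ih
    intro hj
    have hpow : (fun x => (x - a) ^ n) =O[𝓝 a] fun x => (x - a) ^ j :=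
      (isBigO_pow_pow_nhds_zero_of_le hj).comp_tendsto (tendsto_sub_nhds_zero_iff.2 tendsto_id)
    have hremainder := isLittleO_sub_pow_smul_of_iteratedDeriv_eq_zero (a := a)
      (hf.of_le (mod_cast hj)) fun i hi => ih i hi (hi.le.trans hj)
    have hmonomial := ((h.trans_isBigO hpow).sub hremainder).congr_left fun x => sub_sub_cancel _ _
    exact (smul_eq_zero_iff_right (by positivity)).1 (eq_zero_of_isLittleO_pow_smul hmonomial)
  · simpa [h n le_rfl] using
      isLittleO_sub_pow_smul_of_iteratedDeriv_eq_zero hf fun j hj => h j hj.le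

theorem iteratedDeriv_sub_const_pow (j n : ℕ) (a : ℝ) :
    iteratedDeriv j (fun x => (x - a) ^ n) a = if j = n then (n.factorial : ℝ) else 0 := by
  simp only [iteratedDeriv_comp_sub_const j (fun x : ℝ => x ^ n), sub_self,
    iteratedDeriv_fun_pow_zero, Nat.cast_ite, Nat.cast_zero]

theorem isLittleO_sub_mul_pow_iff {f : ℝ → ℝ} (hf : ContDiff ℝ n f) (c : ℝ) :
    (fun x => f x - c * (x - a) ^ n) =o[𝓝 a] (fun x => (x - a) ^ n) ↔
      ∀ j ≤ n, iteratedDeriv j f a = if j = n then c * n.factorial else 0 := by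
  have hmonomial : ContDiff ℝ n fun x => c * (x - a) ^ n := by fun_prop
  refine (isLittleO_pow_iff_iteratedDeriv_eq_zero (hf.sub hmonomial)).trans
    (forall₂_congr fun j hj => ?_)
  have hj' : (j : WithTop ℕ∞) ≤ n := mod_cast hj
  rw [iteratedDeriv_fun_sub (hf.of_le hj').contDiffAt (hmonomial.of_le hj').contDiffAt,
    iteratedDeriv_const_mul_field, iteratedDeriv_sub_const_pow, sub_eq_zero, mul_ite, mul_zero]

end Taylor

section Asymptotics

variable {α E F : Type*} [NormedAddCommGroup E] [NormedSpace ℝ E] [NormedAddCommGroup F]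

theorem isLittleO_sub_of_hasDerivAt {l : Filter α} {z z' : α → ℝ → E} {ρ : α → F} {T : ℝ}
    (hz : ∀ x t, HasDerivAt (z x) (z' x t) t)
    (h : uncurry z' =o[l ×ˢ 𝓟 (Icc 0 T)] fun p => ρ p.1) :
    (fun p => z p.1 p.2 - z p.1 0) =o[l ×ˢ 𝓟 (Icc 0 T)] fun p => ρ p.1 := by
  refine isLittleO_iff.2 fun c hc => eventually_prod_principal_iff.2 ?_
  have hbound := eventually_prod_principal_iff.1 (h.def (c := c / (|T| + 1)) (by positivity))
  filter_upwards [hbound] with x hx t ht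
  have hTt : t ≤ |T| + 1 := by linarith [ht.2, le_abs_self T]
  calc ‖z x t - z x 0‖ ≤ c / (|T| + 1) * ‖ρ x‖ * (t - 0) :=
        norm_image_sub_le_of_norm_deriv_le_segment' (fun s _ => (hz x s).hasDerivWithinAt)
          (fun s hs => hx s (Ico_subset_Icc_self hs)) t ht
    _ ≤ c / (|T| + 1) * ‖ρ x‖ * (|T| + 1) := by gcongr; simpa using hTt
    _ = c * ‖ρ x‖ := by field_simp

end Asymptotics

theorem gronwallBound_zero_eq_mul (K ε x : ℝ) :
    gronwallBound 0 K ε x = ε * gronwallBound 0 K 1 x := by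
  by_cases hK : K = 0
  · simp [hK, gronwallBound_K0]
  · simp only [gronwallBound_of_K_ne_0 hK]
    ring

namespace IsGlobalFlow

section FixedPoint

variable {E F : Type*} [NormedAddCommGroup E] [NormedSpace ℝ E] [NormedAddCommGroup F]
  {v w : E → E} {φ ψ : ℝ → E → E} {K : ℝ≥0} {a : E}

theorem isBigO_sub_fixedPoint (hφ : IsGlobalFlow v φ) (hK : LipschitzWith K v) (ha : v a = 0)
    (T : ℝ) :
    (fun p : E × ℝ => φ p.2 p.1 - a) =O[𝓝 a ×ˢ 𝓟 (Icc 0 T)] fun p => p.1 - a := by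
  refine .of_bound (Real.exp (K * T))
    (eventually_prod_principal_iff.2 (.of_forall fun x t ht => ?_))
  have hdist := hφ.dist_le hK t x a
  rw [hφ.apply_eq_self_of_eq_zero hK ha, dist_eq_norm, dist_eq_norm, abs_of_nonneg ht.1] at hdist
  exact hdist.trans (by rw [mul_comm]; gcongr; exact ht.2)

theorem tendsto_fixedPoint (hφ : IsGlobalFlow v φ) (hK : LipschitzWith K v) (ha : v a = 0)
    (T : ℝ) : Tendsto (fun p : E × ℝ => φ p.2 p.1) (𝓝 a ×ˢ 𝓟 (Icc 0 T)) (𝓝 a) := by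
  refine tendsto_sub_nhds_zero_iff.1 ((hφ.isBigO_sub_fixedPoint hK ha T).trans_tendsto ?_)
  exact tendsto_sub_nhds_zero_iff.2 tendsto_fst

theorem isEquivalent_sub_fixedPoint (hφ : IsGlobalFlow v φ) (hK : LipschitzWith K v)
    (ha : v a = 0) (hv : HasFDerivAt v (0 : E →L[ℝ] E) a) (T : ℝ) :
    (fun p : E × ℝ => φ p.2 p.1 - a) ~[𝓝 a ×ˢ 𝓟 (Icc 0 T)] fun p => p.1 - a := by
  have hspeed : (fun p : E × ℝ => v (φ p.2 p.1)) =o[𝓝 a ×ˢ 𝓟 (Icc 0 T)] fun p => p.1 - a := by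
    have hlin : v =o[𝓝 a] fun x => x - a := by simpa [ha] using hv.isLittleO
    exact (hlin.comp_tendsto (hφ.tendsto_fixedPoint hK ha T)).trans_isBigO
      (hφ.isBigO_sub_fixedPoint hK ha T)
  refine (isLittleO_sub_of_hasDerivAt (z := fun x t => φ t x) (ρ := fun x => x - a)
    (fun x t => hφ.hasDerivAt t x) hspeed).congr_left fun p => ?_
  simp [hφ.zero_apply]

theorem isBigO_sub_of_isBigO_sub (hφ : IsGlobalFlow v φ) (hψ : IsGlobalFlow w ψ)
    (hK : LipschitzWith K v) {l : Filter E} {ρ : E → F} {T : ℝ}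
    (h : (fun p : E × ℝ => v (ψ p.2 p.1) - w (ψ p.2 p.1)) =O[l ×ˢ 𝓟 (Icc 0 T)] fun p => ρ p.1) :
    (fun p : E × ℝ => φ p.2 p.1 - ψ p.2 p.1) =O[l ×ˢ 𝓟 (Icc 0 T)] fun p => ρ p.1 := by
  obtain ⟨C, hC0, hC⟩ := h.exists_pos
  refine .of_bound (C * gronwallBound 0 K 1 T) (eventually_prod_principal_iff.2 ?_)
  filter_upwards [eventually_prod_principal_iff.1 hC.bound] with x hx t ht
  have hgronwall := dist_le_of_approx_trajectories_ODE (v := fun _ => v) (δ := 0) (εf := 0)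
    (εg := C * ‖ρ x‖) (fun _ => hK)
    (hφ.continuous_left x).continuousOn (fun s _ => (hφ.hasDerivAt s x).hasDerivWithinAt)
    (fun s _ => (dist_self _).le)
    (hψ.continuous_left x).continuousOn (fun s _ => (hψ.hasDerivAt s x).hasDerivWithinAt)
    (fun s hs => by rw [dist_comm, dist_eq_norm]; exact hx s (Ico_subset_Icc_self hs))
    (by simp [hφ.zero_apply, hψ.zero_apply]) t ht
  calc ‖φ t x - ψ t x‖ ≤ C * ‖ρ x‖ * gronwallBound 0 K 1 t := by
        simpa [dist_eq_norm, gronwallBound_zero_eq_mul K (C * ‖ρ x‖)] using hgronwall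
    _ ≤ C * ‖ρ x‖ * gronwallBound 0 K 1 T := by
        gcongr; exact gronwallBound_mono le_rfl zero_le_one K.2 ht.2
    _ = C * gronwallBound 0 K 1 T * ‖ρ x‖ := by ring

end FixedPoint

section Comparison

variable {g h : ℝ → ℝ} {U V : ℝ → ℝ → ℝ} {K L : ℝ≥0} {a : ℝ}

theorem isLittleO_perturbation_along (hV : IsGlobalFlow h V) (hL : LipschitzWith L h)
    (ha : h a = 0) (hh : HasDerivAt h 0 a) {c : ℝ} {n : ℕ}
    (hgh : (fun x => g x - h x - c * (x - a) ^ n) =o[𝓝 a] fun x => (x - a) ^ n) (T : ℝ) :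
    (fun p : ℝ × ℝ => g (V p.2 p.1) - h (V p.2 p.1) - c * (p.1 - a) ^ n)
      =o[𝓝 a ×ˢ 𝓟 (Icc 0 T)] fun p => (p.1 - a) ^ n := by
  have hequiv := (hV.isEquivalent_sub_fixedPoint hL ha
    (by simpa using hh.hasFDerivAt) T).pow n
  have hcomp := (hgh.comp_tendsto (hV.tendsto_fixedPoint hL ha T)).trans_isBigO hequiv.isBigO
  refine (hcomp.add (hequiv.isLittleO.const_mul_left c)).congr_left fun p => ?_
  simp only [comp_apply, Pi.sub_apply, Pi.pow_apply]
  ring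

-- The velocities of the two flows differ by `c (x - a) ^ n` to leading order: since `g` is flat to
-- first order at `a`, `g (U t x) - g (V t x)` is negligible against `U t x - V t x`, which is
-- `O((x - a) ^ n)` by Grönwall's inequality.
theorem isLittleO_sub_sub_mul_pow (hU : IsGlobalFlow g U) (hV : IsGlobalFlow h V)
    (hK : LipschitzWith K g) (hL : LipschitzWith L h) (hga : g a = 0) (hha : h a = 0)
    (hg : HasStrictDerivAt g 0 a) (hh : HasDerivAt h 0 a) {c : ℝ} {n : ℕ}
    (hgh : (fun x => g x - h x - c * (x - a) ^ n) =o[𝓝 a] fun x => (x - a) ^ n) (T : ℝ) :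
    (fun p : ℝ × ℝ => U p.2 p.1 - V p.2 p.1 - p.2 * (c * (p.1 - a) ^ n))
      =o[𝓝 a ×ˢ 𝓟 (Icc 0 T)] fun p => (p.1 - a) ^ n := by
  have hpert := hV.isLittleO_perturbation_along hL hha hh hgh T
  have hsub : (fun p : ℝ × ℝ => U p.2 p.1 - V p.2 p.1)
      =O[𝓝 a ×ˢ 𝓟 (Icc 0 T)] fun p => (p.1 - a) ^ n :=
    hU.isBigO_sub_of_isBigO_sub hV hK (ρ := fun x => (x - a) ^ n) ((hpert.isBigO.add
      (isBigO_const_mul_self c _ _)).congr_left fun p => sub_add_cancel _ _)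
  have hfeedback : (fun p : ℝ × ℝ => g (U p.2 p.1) - g (V p.2 p.1))
      =o[𝓝 a ×ˢ 𝓟 (Icc 0 T)] fun p => (p.1 - a) ^ n := by
    have hstrict : (fun q : ℝ × ℝ => g q.1 - g q.2) =o[𝓝 (a, a)] fun q => q.1 - q.2 := by
      simpa using hg.isLittleO
    exact (hstrict.comp_tendsto ((hU.tendsto_fixedPoint hK hga T).prodMk_nhds
      (hV.tendsto_fixedPoint hL hha T))).trans_isBigO hsub
  have hderiv (x t : ℝ) : HasDerivAt (fun s => U s x - V s x - s * (c * (x - a) ^ n))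
      (g (U t x) - h (V t x) - c * (x - a) ^ n) t :=
    ((hU.hasDerivAt t x).sub (hV.hasDerivAt t x)).sub (hasDerivAt_mul_const _)
  refine (isLittleO_sub_of_hasDerivAt (ρ := fun x => (x - a) ^ n) hderiv
    ((hfeedback.add hpert).congr_left fun p => ?_)).congr_left fun p => ?_
  · simp only [uncurry]
    ring
  · simp [hU.zero_apply, hV.zero_apply]

theorem iteratedDeriv_sub_iteratedDeriv (hU : IsGlobalFlow g U) (hV : IsGlobalFlow h V)
    (hg : ContDiff ℝ ∞ g) (hh : ContDiff ℝ ∞ h) (hK : LipschitzWith K g) (hL : LipschitzWith L h)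
    (hga : g a = 0) (hha : h a = 0) (hg' : deriv g a = 0) (hh' : deriv h a = 0) {n : ℕ}
    (hgh : ∀ j < n, iteratedDeriv j g a = iteratedDeriv j h a) {t : ℝ} (ht : 0 ≤ t) :
    iteratedDeriv n (U t) a - iteratedDeriv n (V t) a =
      t * (iteratedDeriv n g a - iteratedDeriv n h a) := by
  set c := (iteratedDeriv n g a - iteratedDeriv n h a) / n.factorial with hc
  have hnat {f : ℝ → ℝ} (hf : ContDiff ℝ ∞ f) (j : ℕ) : ContDiff ℝ j f :=
    hf.of_le (mod_cast le_top)
  have hfields : (fun x => g x - h x - c * (x - a) ^ n) =o[𝓝 a] fun x => (x - a) ^ n := by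
    refine (isLittleO_sub_mul_pow_iff (hnat (hg.sub hh) n) c).2 fun j hj => ?_
    rw [iteratedDeriv_fun_sub (hnat hg j).contDiffAt (hnat hh j).contDiffAt]
    split_ifs with hjn
    · rw [hjn, hc, div_mul_cancel₀ _ (by positivity)]
    · rw [hgh j (hj.lt_of_ne hjn), sub_self]
  have hU' := hU.contDiff_right hg (by simp) hK t
  have hV' := hV.contDiff_right hh (by simp) hL t
  have hflows : (fun x => U t x - V t x - t * c * (x - a) ^ n) =o[𝓝 a] fun x => (x - a) ^ n := by
    have hderiv {f : ℝ → ℝ} (hf : ContDiff ℝ ∞ f) (hf' : deriv f a = 0) : HasStrictDerivAt f 0 a :=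
      hf' ▸ hf.contDiffAt.hasStrictDerivAt (by simp)
    have htime : Tendsto (fun x => (x, t)) (𝓝 a) (𝓝 a ×ˢ 𝓟 (Icc 0 t)) :=
      tendsto_id.prodMk (tendsto_principal.2 (.of_forall fun _ => right_mem_Icc.2 ht))
    simpa only [comp_def, mul_assoc] using (hU.isLittleO_sub_sub_mul_pow hV hK hL hga hha
      (hderiv hg hg') (hderiv hh hh').hasDerivAt hfields t).comp_tendsto htime
  have hjet := (isLittleO_sub_mul_pow_iff (hnat (hU'.sub hV') n) _).1 hflows n le_rfl
  rw [iteratedDeriv_fun_sub (hnat hU' n).contDiffAt (hnat hV' n).contDiffAt, if_pos rfl] at hjet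
  rw [hjet, hc, mul_assoc, div_mul_cancel₀ _ (by positivity)]

end Comparison

end IsGlobalFlow

section Borel

variable {E : Type*} [NormedAddCommGroup E] [NormedSpace ℝ E]

theorem exists_norm_iteratedDeriv_le_of_hasCompactSupport {f : ℝ → E} {k : ℕ}
    (hf : ContDiff ℝ k f) (hc : HasCompactSupport f) : ∃ C, ∀ x, ‖iteratedDeriv k f x‖ ≤ C := by
  simp only [← norm_iteratedFDeriv_eq_norm_iteratedDeriv]
  exact (hc.iteratedFDeriv k).exists_bound_of_continuous (hf.continuous_iteratedFDeriv le_rfl)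

theorem norm_iteratedDeriv_rescale {f : ℝ → ℝ} {j k : ℕ} (hf : ContDiff ℝ k f) (hk : k ≤ j)
    {ε : ℝ} (hε : 0 < ε) (x : ℝ) :
    ‖iteratedDeriv k (fun x => ε ^ j * f (ε⁻¹ * x)) x‖ =
      ε ^ (j - k) * ‖iteratedDeriv k f (ε⁻¹ * x)‖ := by
  simp only [iteratedDeriv_const_mul_field, iteratedDeriv_comp_const_mul hf, norm_mul, norm_pow,
    norm_inv, Real.norm_of_nonneg hε.le]
  rw [pow_sub₀ ε hε.ne' hk, inv_pow, mul_assoc]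

theorem exists_contDiff_hasCompactSupport_eventuallyEq_pow (j : ℕ) {δ : ℝ} (hδ : 0 < δ) :
    ∃ f : ℝ → ℝ, ContDiff ℝ ∞ f ∧ HasCompactSupport f ∧ f =ᶠ[𝓝 0] (fun x => x ^ j) ∧
      ∀ k < j, ∀ x, ‖iteratedDeriv k f x‖ ≤ δ := by
  let χ : ContDiffBump (0 : ℝ) := ⟨1, 2, one_pos, one_lt_two⟩
  let p : ℝ → ℝ := fun y => y ^ j * χ y
  have hp : ContDiff ℝ ∞ p := (contDiff_id.pow j).mul χ.contDiff
  have hpc : HasCompactSupport p := χ.hasCompactSupport.mul_left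
  have hpk (k : ℕ) : ContDiff ℝ k p := hp.of_le (mod_cast le_top)
  choose C hC using fun k => exists_norm_iteratedDeriv_le_of_hasCompactSupport (hpk k) hpc
  obtain ⟨D, hD⟩ := ((Finset.range j).image C).exists_le
  obtain ⟨ε, hε, hε1, hεδ⟩ : ∃ ε > 0, ε ≤ 1 ∧ ε * |D| ≤ δ := by
    refine ⟨min 1 (δ / (|D| + 1)), by positivity, min_le_left _ _, ?_⟩
    calc min 1 (δ / (|D| + 1)) * |D| ≤ δ / (|D| + 1) * (|D| + 1) := by
          gcongr
          · exact min_le_right _ _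
          · linarith
      _ = δ := by field_simp
  refine ⟨fun x => ε ^ j * p (ε⁻¹ * x), by fun_prop, ?_, ?_, fun k hk x => ?_⟩
  · exact (hpc.comp_homeomorph (Homeomorph.mulLeft₀ ε⁻¹ (by positivity))).mul_left
  · have hscale : Tendsto (fun x => ε⁻¹ * x) (𝓝 0) (𝓝 0) := by
      simpa using (continuous_const_mul ε⁻¹).tendsto 0
    filter_upwards [hscale.eventually χ.eventuallyEq_one] with x hx
    simp only [p, hx, Pi.one_apply, mul_one]
    rw [← mul_pow, mul_inv_cancel_left₀ hε.ne']
  · have hDk : C k ≤ |D| :=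
      (hD _ (Finset.mem_image_of_mem C (Finset.mem_range.2 hk))).trans (le_abs_self D)
    calc ‖iteratedDeriv k (fun x => ε ^ j * p (ε⁻¹ * x)) x‖
        = ε ^ (j - k) * ‖iteratedDeriv k p (ε⁻¹ * x)‖ :=
          norm_iteratedDeriv_rescale (hpk k) hk.le hε x
      _ ≤ ε * |D| := by
          gcongr
          · exact pow_le_of_le_one hε.le hε1 (Nat.sub_ne_zero_of_lt hk)
          · exact (hC k _).trans hDk
      _ ≤ δ := hεδ

theorem contDiff_tsum_and_iteratedDeriv_tsum [CompleteSpace E] {f : ℕ → ℝ → E} {u : ℕ → ℝ}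
    (hf : ∀ j, ContDiff ℝ ∞ (f j)) (hc : ∀ j, HasCompactSupport (f j)) (hu : Summable u)
    (hfu : ∀ j, ∀ k < j, ∀ x, ‖iteratedDeriv k (f j) x‖ ≤ u j) :
    ContDiff ℝ ∞ (fun x => ∑' j, f j x) ∧
      ∀ k x, iteratedDeriv k (fun x => ∑' j, f j x) x = ∑' j, iteratedDeriv k (f j) x := by
  choose C hC using fun k j : ℕ => exists_norm_iteratedDeriv_le_of_hasCompactSupport
    ((hf j).of_le (mod_cast le_top : (k : WithTop ℕ∞) ≤ ∞)) (hc j)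
  let v : ℕ → ℕ → ℝ := fun k j => if k < j then u j else C k j
  have hv (k : ℕ) : Summable (v k) := by
    refine (summable_congr_atTop ?_).1 hu
    filter_upwards [eventually_gt_atTop k] with j hj using (if_pos hj).symm
  have hfv (k j : ℕ) (x : ℝ) : ‖iteratedFDeriv ℝ k (f j) x‖ ≤ v k j := by
    rw [norm_iteratedFDeriv_eq_norm_iteratedDeriv]
    simp only [v]
    split_ifs with hkj
    exacts [hfu j k hkj x, hC k j x]
  refine ⟨contDiff_tsum hf (fun k _ => hv k) fun k j x _ => hfv k j x, fun k x => ?_⟩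
  simp only [iteratedDeriv_eq_iteratedFDeriv]
  rw [iteratedFDeriv_tsum_apply hf (fun k _ => hv k) (fun k j x _ => hfv k j x)
    (mod_cast le_top : (k : ℕ∞) ≤ ⊤), ContinuousMultilinearMap.tsum_eval]
  exact .of_norm_bounded (hv k) fun j => hfv k j x

theorem exists_contDiff_iteratedDeriv_zero_eq [CompleteSpace E] (c : ℕ → E) :
    ∃ f : ℝ → E, ContDiff ℝ ∞ f ∧ ∀ n, iteratedDeriv n f 0 = c n := by
  let b (j : ℕ) : E := (j.factorial : ℝ)⁻¹ • c j
  choose p hp hpc hpow hpb using fun j => exists_contDiff_hasCompactSupport_eventuallyEq_pow j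
    (δ := (1 / 2) ^ j / (‖b j‖ + 1)) (by positivity)
  have hderiv (j k : ℕ) (x : ℝ) :
      iteratedDeriv k (fun x => p j x • b j) x = iteratedDeriv k (p j) x • b j :=
    iteratedDeriv_smul_const ((hp j).of_le (mod_cast le_top)).contDiffAt _
  obtain ⟨hsmooth, htsum⟩ := contDiff_tsum_and_iteratedDeriv_tsum (f := fun j x => p j x • b j)
    (fun j => (hp j).smul contDiff_const) (fun j => (hpc j).smul_right) summable_geometric_two
    fun j k hk x => by
      calc ‖iteratedDeriv k (fun x => p j x • b j) x‖
          ≤ (1 / 2) ^ j / (‖b j‖ + 1) * (‖b j‖ + 1) := by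
            rw [hderiv, norm_smul]
            gcongr
            · exact hpb j k hk x
            · linarith
        _ = (1 / 2) ^ j := by field_simp
  refine ⟨_, hsmooth, fun n => ?_⟩
  have hjet (j : ℕ) : iteratedDeriv n (fun x => p j x • b j) 0 = if j = n then c n else 0 := by
    rw [hderiv, ((hpow j).iteratedDeriv n).eq_of_nhds, iteratedDeriv_fun_pow_zero]
    obtain rfl | hne := eq_or_ne j n
    · simp [b, smul_smul, Nat.factorial_ne_zero]
    · simp [hne, hne.symm]
  rw [htsum, tsum_congr hjet, tsum_ite_eq]

theorem contDiff_comp_arcsin_sin {n : ℕ∞} {F : ℝ → E} (hF : ContDiff ℝ n F)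
    (hpos : ∀ᶠ x in 𝓝 (π / 2), F x = 0) (hneg : ∀ᶠ x in 𝓝 (-(π / 2)), F x = 0) :
    ContDiff ℝ n fun θ => F (Real.arcsin (Real.sin θ)) := by
  refine contDiff_iff_contDiffAt.2 fun θ => ?_
  by_cases hθ : Real.sin θ = -1 ∨ Real.sin θ = 1
  · have hcont : ContinuousAt (fun y => Real.arcsin (Real.sin y)) θ := by fun_prop
    have hzero : ∀ᶠ y in 𝓝 θ, F (Real.arcsin (Real.sin y)) = 0 := by
      refine hcont.eventually (p := fun x => F x = 0) ?_
      obtain hθ | hθ := hθ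
      · simpa [hθ] using hneg
      · simpa [hθ] using hpos
    exact contDiffAt_const.congr_of_eventuallyEq hzero
  · rw [not_or] at hθ
    have harcsin : ContDiffAt ℝ n Real.arcsin (Real.sin θ) := Real.contDiffAt_arcsin hθ.1 hθ.2
    exact hF.contDiffAt.comp θ (harcsin.comp θ Real.contDiff_sin.contDiffAt)

theorem exists_periodic_two_pi_contDiff_eventuallyEq {n : ℕ∞} {f : ℝ → E} (hf : ContDiff ℝ n f)
    (a : ℝ) : ∃ g : ℝ → E, ContDiff ℝ n g ∧ Periodic g (2 * π) ∧ g =ᶠ[𝓝 a] f := by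
  let χ : ContDiffBump (0 : ℝ) := ⟨1 / 2, 1, by norm_num, by norm_num⟩
  let F : ℝ → E := fun x => χ x • f (x + a)
  have hF : ContDiff ℝ n F := χ.contDiff.smul (hf.comp (contDiff_id.add contDiff_const))
  have hFzero {x : ℝ} (hx : 1 < |x|) : ∀ᶠ y in 𝓝 x, F y = 0 := by
    filter_upwards [continuous_abs.continuousAt.eventually (lt_mem_nhds hx)] with y hy
    simp only [F]
    rw [χ.zero_of_le_dist (by simpa using hy.le), zero_smul]
  have hpi : 1 < |π / 2| := by
    rw [abs_of_pos Real.pi_div_two_pos]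
    linarith [Real.pi_gt_three]
  refine ⟨fun θ => F (Real.arcsin (Real.sin (θ - a))), ?_, fun θ => ?_, ?_⟩
  · exact (contDiff_comp_arcsin_sin hF (hFzero hpi) (hFzero (by rwa [abs_neg]))).comp
      (contDiff_id.sub contDiff_const)
  · simp only [add_sub_right_comm, Real.sin_add_two_pi]
  · have hsub : Tendsto (fun θ => θ - a) (𝓝 a) (𝓝 0) := tendsto_sub_nhds_zero_iff.2 tendsto_id
    have hIcc : ∀ᶠ x : ℝ in 𝓝 0, x ∈ Icc (-(π / 2)) (π / 2) :=
      Icc_mem_nhds (neg_neg_iff_pos.2 Real.pi_div_two_pos) Real.pi_div_two_pos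
    filter_upwards [hsub.eventually hIcc, hsub.eventually χ.eventuallyEq_one] with θ hθ hχ
    simp only [F, Real.arcsin_sin hθ.1 hθ.2, hχ, Pi.one_apply, one_smul, sub_add_cancel]

theorem exists_periodic_two_pi_contDiff_iteratedDeriv_eq [CompleteSpace E] (c : ℕ → E) (a : ℝ) :
    ∃ g : ℝ → E, ContDiff ℝ ∞ g ∧ Periodic g (2 * π) ∧ ∀ n, iteratedDeriv n g a = c n := by
  obtain ⟨f, hf, hfc⟩ := exists_contDiff_iteratedDeriv_zero_eq c
  have hshift : ContDiff ℝ ∞ fun x => f (x - a) := hf.comp (contDiff_id.sub contDiff_const)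
  obtain ⟨g, hg, hper, hgf⟩ := exists_periodic_two_pi_contDiff_eventuallyEq hshift a
  refine ⟨g, hg, hper, fun n => ?_⟩
  simp only [(hgf.iteratedDeriv n).eq_of_nhds, iteratedDeriv_comp_sub_const n f, sub_self, hfc]

end Borel

theorem exists_forall_eq_apply_indicator_Iio {ι α : Type*} [Preorder ι] [WellFoundedLT ι] [Zero α]
    (F : ι → (ι → α) → α) : ∃ b : ι → α, ∀ i, b i = F i ((Iio i).indicator b) := by
  classical
  let step (i : ι) (r : ∀ j, j < i → α) : α := F i fun j => if h : j < i then r j h else 0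
  refine ⟨wellFounded_lt.fix step, fun i => ?_⟩
  rw [WellFounded.fix_eq]
  simp only [step, dite_eq_ite]
  rfl

theorem exists_periodic_isGlobalFlow_iteratedDeriv_eq (c : ℕ → ℝ) (a : ℝ) :
    ∃ (g : ℝ → ℝ) (φ : ℝ → ℝ → ℝ) (K : ℝ≥0), ContDiff ℝ ∞ g ∧ Periodic g (2 * π) ∧
      LipschitzWith K g ∧ IsGlobalFlow g φ ∧ ∀ n, iteratedDeriv n g a = c n := by
  obtain ⟨g, hg, hper, hgc⟩ := exists_periodic_two_pi_contDiff_iteratedDeriv_eq c a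
  have hg1 : ContDiff ℝ 1 g := hg.of_le (mod_cast le_top)
  obtain ⟨K, hK⟩ := exists_lipschitzWith_of_periodic hg1 hper Real.two_pi_pos.ne'
  obtain ⟨φ, hφ⟩ := exists_isGlobalFlow hg1 hK
  exact ⟨g, φ, K, hg, hper, hK, hφ, hgc⟩

theorem exists_periodic_isGlobalFlow_iteratedDeriv_time_one_eq (lam : ℕ → ℝ) (a : ℝ) :
    ∃ (g : ℝ → ℝ) (φ : ℝ → ℝ → ℝ) (K : ℝ≥0), ContDiff ℝ ∞ g ∧ Periodic g (2 * π) ∧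
      LipschitzWith K g ∧ IsGlobalFlow g φ ∧ g a = 0 ∧ deriv g a = 0 ∧
      ∀ n, 2 ≤ n → iteratedDeriv n (φ 1) a = lam n := by
  choose g φ K hg hper hK hφ hjet using fun c => exists_periodic_isGlobalFlow_iteratedDeriv_eq c a
  -- Replacing the coefficient `0` of order `n` by `c n` adds exactly `c n` to the `n`th derivative
  -- of the time-one map, so `c n` is the defect of the field with the lower coefficients only.
  obtain ⟨c, hc⟩ := exists_forall_eq_apply_indicator_Iio fun n (c : ℕ → ℝ) =>
    if 2 ≤ n then lam n - iteratedDeriv n (φ c 1) a else 0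
  have hc0 : c 0 = 0 := by simpa using hc 0
  have hc1 : c 1 = 0 := by simpa using hc 1
  have hga {b : ℕ → ℝ} (hb : b 0 = 0) : g b a = 0 := by simpa [hb] using hjet b 0
  have hg'a {b : ℕ → ℝ} (hb : b 1 = 0) : deriv (g b) a = 0 := by simpa [hb] using hjet b 1
  refine ⟨g c, φ c, K c, hg c, hper c, hK c, hφ c, hga hc0, hg'a hc1, fun n hn => ?_⟩
  set d := (Iio n).indicator c
  have hdn : d n = 0 := indicator_of_notMem self_notMem_Iio c
  have hlow (j : ℕ) (hj : j < n) : d j = c j := indicator_of_mem (mem_Iio.2 hj) c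
  have hcompare := (hφ c).iteratedDeriv_sub_iteratedDeriv (hφ d) (hg c) (hg d) (hK c) (hK d)
    (hga hc0) (hga ((hlow 0 (by lia)).trans hc0)) (hg'a hc1) (hg'a ((hlow 1 (by lia)).trans hc1))
    (n := n) (fun j hj => by rw [hjet, hjet, hlow j hj]) zero_le_one
  rw [hjet, hjet, hdn, hc n, if_pos hn] at hcompare
  linarith

end

/-- Lemma A.2: any prescribed sequence `(λ_n)_{n≥2}` of higher derivatives at the fixed
point `π` is realized by the time-one flow of some smooth `2π`-periodic vector field `g`
vanishing to first order at `π`. -/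
theorem stmt_13 (lam : ℕ → ℝ) :
    ∃ (g : ℝ → ℝ) (φ : ℝ → ℝ → ℝ),
      ContDiff ℝ (⊤ : ℕ∞) g ∧ ContDiff ℝ (⊤ : ℕ∞) (Function.uncurry φ) ∧ (∀ θ : ℝ, g (θ + 2 * π) = g θ) ∧
      g π = 0 ∧ deriv g π = 0 ∧
      (∀ t θ : ℝ, HasDerivAt (fun s => φ s θ) (g (φ t θ)) t) ∧
      (∀ θ : ℝ, φ 0 θ = θ) ∧
      φ 1 π = π ∧ deriv (φ 1) π = 1 ∧
      (∀ n : ℕ, 2 ≤ n → iteratedDeriv n (φ 1) π = lam n) := by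
  obtain ⟨g, φ, K, hg, hper, hK, hφ, hgπ, hg'π, hjet⟩ :=
    exists_periodic_isGlobalFlow_iteratedDeriv_time_one_eq lam π
  have hfix : ∀ t, φ t π = π := hφ.apply_eq_self_of_eq_zero hK hgπ
  have hderiv : deriv (φ 1) π = 1 := by
    simpa [hfix, hg'π] using (hφ.hasDerivAt_right (hg.of_le (mod_cast le_top)) hK 1 π).deriv
  exact ⟨g, φ, hg, hφ.contDiff_uncurry hg (by simp) hK, hper, hgπ, hg'π, hφ.hasDerivAt,
    hφ.zero_apply, hfix 1, hderiv, hjet⟩
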